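/- There exists an absolute constant C such that for every n ≥ 2 and every f ∈ L^1[0,1), the Riesz logarithmic mean satisfies ‖f ∗ G_n‖_{L^1[0,1)} ≤ C ‖f‖_{L^1[0,1)}; that is, the operators f ↦ f ∗ G_n are uniformly of strong type (1,1). -/

import Mathlib

open MeasureTheory Filter

noncomputable section

/-- The unit cube `[0,1)^d`. -/
def unitCube (d : ℕ) : Set (Fin d → ℝ) := Set.univ.pi fun _ => Set.Ico (0:ℝ) 1

/-- Lebesgue measure restricted to the unit cube `[0,1)^d`. -/
def cubeMeasure (d : ℕ) : Measure (Fin d → ℝ) := volume.restrict (unitCube d)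

/-- The `1`-periodic function equal to `1` on `[0,1/2)` and to `-1` on `[1/2,1)`. -/
def r0 (x : ℝ) : ℝ := if Int.fract x < 1/2 then 1 else -1

/-- The Rademacher functions. -/
def rademacher (n : ℕ) (x : ℝ) : ℝ := r0 (2 ^ n * x)

/-- The Walsh functions (in Paley enumeration, via binary digits). -/
def walsh (n : ℕ) (x : ℝ) : ℝ :=
  ∏ k ∈ Finset.range (n + 1), if n.testBit k then rademacher k x else 1

/-- The Walsh–Dirichlet kernel `D_n`. -/
def dirichletKernel (n : ℕ) (x : ℝ) : ℝ := ∑ k ∈ Finset.range n, walsh k x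

/-- `l_n = ∑_{k=1}^{n-1} 1/k`. -/
def logSum (n : ℕ) : ℝ := ∑ k ∈ Finset.Icc 1 (n - 1), (1 : ℝ) / k

/-- The Nörlund logarithmic kernel `F_n`. -/
def FKernel (n : ℕ) (u : ℝ) : ℝ :=
  (1 / logSum n) * ∑ i ∈ Finset.Ico 1 n, dirichletKernel (n - i) u / i

/-- The Riesz logarithmic kernel `G_n`. -/
def GKernel (n : ℕ) (u : ℝ) : ℝ :=
  (1 / logSum n) * ∑ i ∈ Finset.Ico 1 n, dirichletKernel i u / i

/-- Walsh–Fourier coefficient of `f` on the unit cube. -/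
def walshCoef {d : ℕ} (f : (Fin d → ℝ) → ℝ) (j : Fin d → ℕ) : ℝ :=
  ∫ x, f x * ∏ i, walsh (j i) (x i) ∂(cubeMeasure d)

/-- Rectangular partial sums of the multiple Walsh–Fourier series. -/
def rectPartialSum {d : ℕ} (f : (Fin d → ℝ) → ℝ) (N : Fin d → ℕ) (x : Fin d → ℝ) : ℝ :=
  ∑ j ∈ Fintype.piFinset (fun i => Finset.range (N i)),
    walshCoef f j * ∏ i, walsh (j i) (x i)

/-- The mixed logarithmic means `(L_{n_B} ∘ R_{n_{B'}})(f)`. -/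
def mixedLogMean {d : ℕ} (B : Finset (Fin d)) (f : (Fin d → ℝ) → ℝ)
    (n : Fin d → ℕ) (x : Fin d → ℝ) : ℝ :=
  (∏ j, logSum (n j))⁻¹ *
    ∑ i ∈ Fintype.piFinset (fun j => Finset.Ico 1 (n j)),
      rectPartialSum f (fun j => if j ∈ B then n j - i j else i j) x / ∏ j, (i j : ℝ)

/-- A Young function: convex, continuous, even, vanishing at `0`, with
`Q(u)/u → ∞` at `+∞` and `Q(u)/u → 0` at `0`. -/
structure YoungFunction where
  toFun : ℝ → ℝ
  nonneg : ∀ u, 0 ≤ toFun u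
  convexOn : ConvexOn ℝ Set.univ toFun
  continuous : Continuous toFun
  even : ∀ u, toFun (-u) = toFun u
  map_zero : toFun 0 = 0
  tendsto_atTop : Tendsto (fun u => toFun u / u) atTop atTop
  tendsto_zero : Tendsto (fun u => toFun u / u) (nhdsWithin 0 {(0:ℝ)}ᶜ) (nhds 0)

/-- The set of admissible constants `k` in the Luxemburg norm of `f`. -/
def orliczSet {d : ℕ} (Q : YoungFunction) (f : (Fin d → ℝ) → ℝ) : Set ℝ :=
  {k | 0 < k ∧ Integrable (fun x => Q.toFun (|f x| / k)) (cubeMeasure d) ∧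
    ∫ x, Q.toFun (|f x| / k) ∂(cubeMeasure d) ≤ 1}

/-- `f` belongs to the Orlicz space `L_Q(I^d)`. -/
def MemOrlicz {d : ℕ} (Q : YoungFunction) (f : (Fin d → ℝ) → ℝ) : Prop :=
  Measurable f ∧ (orliczSet Q f).Nonempty

/-- The Luxemburg norm on the Orlicz space `L_Q(I^d)`. -/
def orliczNorm {d : ℕ} (Q : YoungFunction) (f : (Fin d → ℝ) → ℝ) : ℝ :=
  sInf (orliczSet Q f)

/-- `p_n = 2^{2n} + 2^{2n-2} + ⋯ + 2^0`. -/
def pIdx (n : ℕ) : ℕ := ∑ k ∈ Finset.range (n + 1), 4 ^ k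

/-- `m̃ = ⌊ l_{p_{⌊m/2⌋}-1}/16 - 2^15 ⌋`. -/
def mTilde (m : ℕ) : ℤ := ⌊logSum (pIdx (m / 2) - 1) / 16 - 2 ^ 15⌋

/-- `m₀ = min{m : m̃ > 1}`. -/
def m₀ : ℕ := sInf {m : ℕ | 1 < mTilde m}

/-- The set `Ω_n`. -/
def Omega (n : ℕ) : Set ℝ :=
  ⋃ m ∈ Finset.Icc n (2 * n),
    Set.Ico ((2:ℝ) ^ (-(m:ℤ) - 1) + (2:ℝ) ^ (-(m:ℤ) - mTilde m)) ((2:ℝ) ^ (-(m:ℤ)))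

/-- `k`-th binary digit of `x` (the expansion not terminating in `1`'s). -/
def binDigit (k : ℕ) (x : ℝ) : ℕ := (⌊x * 2 ^ (k + 1)⌋).toNat % 2

/-- Dyadic addition on `[0,1)`. -/
def dyadicAdd (x t : ℝ) : ℝ :=
  ∑' k : ℕ, |(binDigit k x : ℝ) - (binDigit k t : ℝ)| / 2 ^ (k + 1)

/-- Dyadic convolution `f ∗ K` on `[0,1)`. -/
def dyadicConv (f K : ℝ → ℝ) (x : ℝ) : ℝ :=
  ∫ t in Set.Ico (0:ℝ) 1, f t * K (dyadicAdd x t)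

/-- Lebesgue measure restricted to `[0,1)`. -/
def unitMeasure : Measure ℝ := volume.restrict (Set.Ico (0:ℝ) 1)

/-- A set `A ⊆ L_Q(I^d)` is nowhere dense w.r.t. the Luxemburg norm. -/
def OrliczNowhereDense {d : ℕ} (Q : YoungFunction) (A : Set ((Fin d → ℝ) → ℝ)) : Prop :=
  ∀ f, MemOrlicz Q f → ∀ ε > 0, ∃ g, MemOrlicz Q g ∧ ∃ δ > 0,
    (∀ h, MemOrlicz Q h → orliczNorm Q (h - g) < δ → orliczNorm Q (h - f) < ε) ∧
    (∀ h, MemOrlicz Q h → orliczNorm Q (h - g) < δ → h ∉ A)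

/-- A set `A ⊆ L_Q(I^d)` is of first Baire category (meager) w.r.t. the Luxemburg norm. -/
def OrliczMeager {d : ℕ} (Q : YoungFunction) (A : Set ((Fin d → ℝ) → ℝ)) : Prop :=
  ∃ F : ℕ → Set ((Fin d → ℝ) → ℝ), (∀ k, OrliczNowhereDense Q (F k)) ∧ A ⊆ ⋃ k, F k

/-! The Walsh functions are, up to a null set, characters for dyadic addition, and their integrals
determine a finite measure on `[0, 1)`. As `w_n` has mean zero for `n ≥ 1`, the translations
`x ↦ x ∔ t` preserve Lebesgue measure, whence Young's inequality `‖f ∗ K‖₁ ≤ ‖f‖₁ ‖K‖₁`.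

It remains to bound `‖G_n‖₁`. The sums `S_n = D_1 + ⋯ + D_n` satisfy
`S_{2^m + j} = S_{2^m} + j D_{2^m} + r_m S_j` for `j ≤ 2^m`, where `D_{2^m} ≥ 0` has integral `1`.
For `j = 2^m` this gives `|S_{2^{m+1}}| ≤ (1 + r_m) |S_{2^m}| + 2^m D_{2^m}`; here `r_m |S_{2^m}|`
integrates to zero because `S_{2^m}` is constant on the dyadic intervals of length `2^{-m}`, so
`‖S_{2^m}‖₁ ≤ 2^m`. Induction on the leading binary digit then yields `‖S_n‖₁ ≤ 2n`, and summation
by parts against the decreasing weights `1 / i` turns this into `‖G_n‖₁ ≤ 2`. -/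

/-! ### Rademacher functions and dyadic step functions -/

lemma r0_eq (y : ℝ) : r0 y = 1 + 4 * ⌊y⌋ - 2 * ⌊2 * y⌋ := by
  have hy := Int.floor_add_fract y
  have h0 := Int.fract_nonneg y
  have h1 := Int.fract_lt_one y
  unfold r0
  split_ifs with h
  · have : ⌊2 * y⌋ = 2 * ⌊y⌋ := by
      rw [Int.floor_eq_iff]; push_cast; constructor <;> linarith
    rw [this]; push_cast; ring
  · have : ⌊2 * y⌋ = 2 * ⌊y⌋ + 1 := by
      rw [Int.floor_eq_iff]; push_cast; constructor <;> linarith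
    rw [this]; push_cast; ring

lemma r0_eq_one_or_neg_one (y : ℝ) : r0 y = 1 ∨ r0 y = -1 := by
  unfold r0; split_ifs <;> simp

lemma abs_r0 (y : ℝ) : |r0 y| = 1 := by
  rcases r0_eq_one_or_neg_one y with h | h <;> simp [h]

lemma measurable_r0 : Measurable r0 := by
  simp only [funext r0_eq]; fun_prop

lemma r0_antiperiodic : Function.Antiperiodic r0 (1 / 2) := by
  intro y
  have hy := Int.floor_add_fract y
  have h0 := Int.fract_nonneg y
  have h1 := Int.fract_lt_one y
  by_cases h : Int.fract y < 1 / 2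
  · have : Int.fract (y + 1 / 2) = Int.fract y + 1 / 2 :=
      Int.fract_eq_iff.2 ⟨by linarith, by linarith, ⌊y⌋, by linarith⟩
    rw [r0, r0, this, if_pos h, if_neg (by linarith)]
  · have : Int.fract (y + 1 / 2) = Int.fract y - 1 / 2 :=
      Int.fract_eq_iff.2 ⟨by linarith, by linarith, ⌊y⌋ + 1, by push_cast; linarith⟩
    rw [r0, r0, this, if_neg h, if_pos (by linarith), neg_neg]

lemma integral_r0_add_one (a : ℝ) : ∫ y in a..a + 1, r0 y = 0 := by
  have hper : Function.Periodic r0 1 := by simpa using r0_antiperiodic.periodic_two_mul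
  have hneg : ∫ y in a..a + 1, r0 y = -∫ y in a..a + 1, r0 y := calc
    ∫ y in a..a + 1, r0 y = ∫ y in (a + 1 / 2)..(a + 1 / 2) + 1, r0 y :=
        hper.intervalIntegral_add_eq _ _
    _ = ∫ y in a..a + 1, r0 (y + 1 / 2) := by
        rw [intervalIntegral.integral_comp_add_right, add_right_comm]
    _ = -∫ y in a..a + 1, r0 y := by
        simp_rw [r0_antiperiodic _, intervalIntegral.integral_neg]
  linarith

lemma rademacher_eq (k : ℕ) (x : ℝ) :
    rademacher k x = 1 + 4 * ⌊2 ^ k * x⌋ - 2 * ⌊2 ^ (k + 1) * x⌋ := by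
  rw [rademacher, r0_eq, pow_succ', mul_assoc]

lemma rademacher_eq_one_or_neg_one (k : ℕ) (x : ℝ) :
    rademacher k x = 1 ∨ rademacher k x = -1 :=
  r0_eq_one_or_neg_one _

lemma abs_rademacher (k : ℕ) (x : ℝ) : |rademacher k x| = 1 := abs_r0 _

lemma floor_two_pow_mul_eq_of_le {k m : ℕ} (hkm : k ≤ m) {x y : ℝ}
    (hxy : ⌊(2 : ℝ) ^ m * x⌋ = ⌊(2 : ℝ) ^ m * y⌋) : ⌊(2 : ℝ) ^ k * x⌋ = ⌊(2 : ℝ) ^ k * y⌋ := by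
  obtain ⟨d, rfl⟩ := Nat.exists_eq_add_of_le hkm
  have coarsen (z : ℝ) : ⌊(2 : ℝ) ^ k * z⌋ = ⌊(2 : ℝ) ^ (k + d) * z⌋ / ((2 ^ d : ℕ) : ℤ) := by
    rw [← Int.floor_div_natCast, pow_add]
    push_cast
    field_simp
  rw [coarsen, coarsen, hxy]

/-- `g` is constant on the dyadic intervals `[j / 2 ^ m, (j + 1) / 2 ^ m)`, i.e. it factors through
`x ↦ ⌊2 ^ m * x⌋`. -/
def IsDyadicStep (m : ℕ) (g : ℝ → ℝ) : Prop :=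
  Function.FactorsThrough g fun x => ⌊(2 : ℝ) ^ m * x⌋

namespace IsDyadicStep

variable {m : ℕ} {g g' : ℝ → ℝ}

lemma mono {n : ℕ} (hg : IsDyadicStep m g) (hmn : m ≤ n) : IsDyadicStep n g :=
  fun _ _ hxy => hg (floor_two_pow_mul_eq_of_le hmn hxy)

lemma comp (hg : IsDyadicStep m g) (φ : ℝ → ℝ) : IsDyadicStep m fun x => φ (g x) :=
  fun _ _ hxy => congrArg φ (hg hxy)

lemma mul (hg : IsDyadicStep m g) (hg' : IsDyadicStep m g') :
    IsDyadicStep m fun x => g x * g' x :=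
  fun _ _ hxy => congrArg₂ _ (hg hxy) (hg' hxy)

lemma sum {ι : Type*} {s : Finset ι} {G : ι → ℝ → ℝ} (hG : ∀ i ∈ s, IsDyadicStep m (G i)) :
    IsDyadicStep m fun x => ∑ i ∈ s, G i x :=
  fun _ _ hxy => Finset.sum_congr rfl fun i hi => hG i hi hxy

lemma prod {ι : Type*} {s : Finset ι} {G : ι → ℝ → ℝ} (hG : ∀ i ∈ s, IsDyadicStep m (G i)) :
    IsDyadicStep m fun x => ∏ i ∈ s, G i x :=
  fun _ _ hxy => Finset.prod_congr rfl fun i hi => hG i hi hxy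

lemma eq_apply_floor (hg : IsDyadicStep m g) (x : ℝ) :
    g x = g (⌊(2 : ℝ) ^ m * x⌋ / 2 ^ m) :=
  hg (by simp [mul_div_cancel₀])

lemma measurable (hg : IsDyadicStep m g) : Measurable g := by
  rw [funext hg.eq_apply_floor]
  exact (measurable_of_countable fun z : ℤ => g (z / 2 ^ m)).comp (by fun_prop)

end IsDyadicStep

lemma ae_unitMeasure_mem_Ico : ∀ᵐ x ∂unitMeasure, x ∈ Set.Ico (0 : ℝ) 1 :=
  ae_restrict_mem measurableSet_Ico

instance : IsProbabilityMeasure unitMeasure := ⟨by simp [unitMeasure]⟩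

lemma floor_two_pow_mul_mem_Ico (m : ℕ) {x : ℝ} (hx : x ∈ Set.Ico (0 : ℝ) 1) :
    ⌊(2 : ℝ) ^ m * x⌋ ∈ Set.Ico (0 : ℤ) (2 ^ m) := by
  refine ⟨Int.floor_nonneg.2 (mul_nonneg (by positivity) hx.1), Int.floor_lt.2 ?_⟩
  push_cast
  exact mul_lt_of_lt_one_right (by positivity) hx.2

lemma IsDyadicStep.integrable {m : ℕ} {g : ℝ → ℝ} (hg : IsDyadicStep m g) :
    Integrable g unitMeasure := by
  have hfinite : ((fun z : ℤ => g (z / 2 ^ m)) '' Set.Ico 0 (2 ^ m)).Finite :=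
    (Set.finite_Ico _ _).image _
  obtain ⟨C, hC⟩ := hfinite.isBounded.exists_norm_le
  refine .of_bound hg.measurable.aestronglyMeasurable C ?_
  filter_upwards [ae_unitMeasure_mem_Ico] with x hx
  rw [hg.eq_apply_floor]
  exact hC _ ⟨_, floor_two_pow_mul_mem_Ico m hx, rfl⟩

lemma ae_comp_floor_mul_r0_eq (h : ℤ → ℝ) (N : ℤ) :
    ∀ᵐ y ∂volume.restrict (Set.uIoc (N : ℝ) (N + 1)), h ⌊y⌋ * r0 y = h N * r0 y := by
  rw [Set.uIoc_of_le (by linarith), ← restrict_Ico_eq_restrict_Ioc]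
  filter_upwards [ae_restrict_mem measurableSet_Ico] with y hy
  rw [Int.floor_eq_iff.2 hy]

lemma intervalIntegrable_comp_floor_mul_r0 (h : ℤ → ℝ) (N : ℤ) :
    IntervalIntegrable (fun y => h ⌊y⌋ * r0 y) volume N (N + 1) := by
  have hr0 : IntervalIntegrable r0 volume N (N + 1) :=
    intervalIntegrable_const (c := (1 : ℝ)) |>.mono_fun measurable_r0.aestronglyMeasurable
      (.of_forall fun y => by simp [abs_r0])
  refine (hr0.const_mul (h N)).congr_ae ?_
  filter_upwards [ae_comp_floor_mul_r0_eq h N] with y hy using hy.symm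

lemma integral_comp_floor_mul_r0 (h : ℤ → ℝ) (N : ℤ) :
    ∫ y in (N : ℝ)..N + 1, h ⌊y⌋ * r0 y = 0 := by
  rw [intervalIntegral.integral_congr_ae_restrict (ae_comp_floor_mul_r0_eq h N),
    intervalIntegral.integral_const_mul, integral_r0_add_one, mul_zero]

lemma IsDyadicStep.integral_rademacher_mul {m : ℕ} {g : ℝ → ℝ} (hg : IsDyadicStep m g) :
    ∫ x, rademacher m x * g x ∂unitMeasure = 0 := by
  let F (y : ℝ) : ℝ := g (⌊y⌋ / 2 ^ m) * r0 y
  have hblocks : ∑ k ∈ Finset.range (2 ^ m), ∫ y in (k : ℝ)..(k + 1 : ℕ), F y =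
      ∫ y in ((0 : ℕ) : ℝ)..(2 ^ m : ℕ), F y :=
    intervalIntegral.sum_integral_adjacent_intervals (a := fun k : ℕ => (k : ℝ)) fun k _ => by
      simpa using intervalIntegrable_comp_floor_mul_r0 (fun z => g (z / 2 ^ m)) k
  calc ∫ x, rademacher m x * g x ∂unitMeasure
      = ∫ x, F (2 ^ m * x) ∂unitMeasure := by
        simp_rw [F, mul_comm (rademacher m _), rademacher, ← hg.eq_apply_floor]
    _ = ∫ x in (0 : ℝ)..1, F (2 ^ m * x) := by
        rw [unitMeasure, integral_Ico_eq_integral_Ioc, intervalIntegral.integral_of_le zero_le_one]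
    _ = (2 ^ m)⁻¹ * ∫ y in ((0 : ℕ) : ℝ)..(2 ^ m : ℕ), F y := by
        rw [intervalIntegral.integral_comp_mul_left F (by positivity)]
        simp
    _ = 0 := by
        rw [← hblocks, Finset.sum_eq_zero, mul_zero]
        intro k _
        simpa using integral_comp_floor_mul_r0 (fun z => g (z / 2 ^ m)) k

lemma isDyadicStep_rademacher (k : ℕ) : IsDyadicStep (k + 1) (rademacher k) := by
  intro x y (hxy : ⌊_⌋ = ⌊_⌋)
  rw [rademacher_eq, rademacher_eq, hxy, floor_two_pow_mul_eq_of_le k.le_succ hxy]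

/-! ### Walsh functions -/

lemma exists_lt_two_pow_eq_two_pow_add {n : ℕ} (hn : n ≠ 0) :
    ∃ m j, j < 2 ^ m ∧ n = 2 ^ m + j := by
  have hle := Nat.pow_log_le_self 2 hn
  have hlt := Nat.lt_pow_succ_log_self Nat.one_lt_two n
  rw [pow_succ] at hlt
  exact ⟨Nat.log 2 n, n - 2 ^ Nat.log 2 n, by omega, by omega⟩

lemma walsh_eq_prod_range {n m : ℕ} (hn : n < 2 ^ m) (x : ℝ) :
    walsh n x = ∏ k ∈ Finset.range m, if n.testBit k then rademacher k x else 1 := by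
  have htail {N : ℕ} (hN : n < 2 ^ N) :
      ∀ k ≥ N, (if n.testBit k then rademacher k x else 1) = 1 := fun k hk => by
    simp [Nat.testBit_lt_two_pow (hN.trans_le (Nat.pow_le_pow_right two_pos hk))]
  rcases le_total m (n + 1) with h | h
  · exact Finset.eventually_constant_prod (htail hn) h
  · refine (Finset.eventually_constant_prod (htail ?_) h).symm
    exact n.lt_succ_self.trans Nat.lt_two_pow_self

lemma walsh_zero (x : ℝ) : walsh 0 x = 1 := by simp [walsh]

lemma walsh_two_pow_add {m j : ℕ} (hj : j < 2 ^ m) (x : ℝ) :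
    walsh (2 ^ m + j) x = rademacher m x * walsh j x := by
  rw [walsh_eq_prod_range (m := m + 1) (by omega), walsh_eq_prod_range hj,
    Finset.prod_range_succ, mul_comm, Nat.testBit_two_pow_add_eq, Nat.testBit_lt_two_pow hj]
  refine congrArg₂ _ (by simp) (Finset.prod_congr rfl fun k hk => ?_)
  rw [Nat.testBit_two_pow_add_gt (Finset.mem_range.1 hk)]

lemma isDyadicStep_walsh {n m : ℕ} (hn : n < 2 ^ m) : IsDyadicStep m (walsh n) := by
  rw [funext (walsh_eq_prod_range hn)]
  refine .prod fun k hk => ?_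
  split_ifs
  · exact (isDyadicStep_rademacher k).mono (Finset.mem_range.1 hk)
  · exact fun _ _ _ => rfl

lemma measurable_walsh (n : ℕ) : Measurable (walsh n) :=
  (isDyadicStep_walsh Nat.lt_two_pow_self).measurable

lemma abs_walsh (n : ℕ) (x : ℝ) : |walsh n x| = 1 := by
  rw [walsh, Finset.abs_prod]
  refine Finset.prod_eq_one fun k _ => ?_
  split_ifs
  · exact abs_rademacher k x
  · exact abs_one

lemma integrable_walsh (μ : Measure ℝ) [IsFiniteMeasure μ] (n : ℕ) : Integrable (walsh n) μ :=
  .of_bound (measurable_walsh n).aestronglyMeasurable 1 (.of_forall fun x => (abs_walsh n x).le)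

lemma integral_walsh_of_ne_zero {n : ℕ} (hn : n ≠ 0) : ∫ x, walsh n x ∂unitMeasure = 0 := by
  obtain ⟨m, j, hj, rfl⟩ := exists_lt_two_pow_eq_two_pow_add hn
  simp_rw [walsh_two_pow_add hj]
  exact (isDyadicStep_walsh hj).integral_rademacher_mul

lemma floor_two_pow_succ_mul_eq_iff (m : ℕ) (x y : ℝ) :
    ⌊(2 : ℝ) ^ (m + 1) * x⌋ = ⌊(2 : ℝ) ^ (m + 1) * y⌋ ↔
      ⌊(2 : ℝ) ^ m * x⌋ = ⌊(2 : ℝ) ^ m * y⌋ ∧ rademacher m x = rademacher m y := by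
  constructor
  · exact fun h => ⟨floor_two_pow_mul_eq_of_le m.le_succ h, isDyadicStep_rademacher m h⟩
  · rintro ⟨hfloor, hrad⟩
    rw [rademacher_eq, rademacher_eq, hfloor] at hrad
    exact_mod_cast (by linarith : (⌊(2 : ℝ) ^ (m + 1) * x⌋ : ℝ) = ⌊(2 : ℝ) ^ (m + 1) * y⌋)

lemma sum_walsh_mul_walsh_two_pow_succ (m : ℕ) (x y : ℝ) :
    ∑ k ∈ Finset.range (2 ^ (m + 1)), walsh k x * walsh k y =
      (1 + rademacher m x * rademacher m y) *
        ∑ k ∈ Finset.range (2 ^ m), walsh k x * walsh k y := by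
  rw [pow_succ, mul_two, Finset.sum_range_add, add_mul, one_mul, Finset.mul_sum]
  refine congrArg₂ _ rfl (Finset.sum_congr rfl fun k hk => ?_)
  rw [walsh_two_pow_add (Finset.mem_range.1 hk), walsh_two_pow_add (Finset.mem_range.1 hk)]
  ring

lemma sum_walsh_mul_walsh_two_pow (m : ℕ) {x y : ℝ} (hxy : ⌊x⌋ = ⌊y⌋) :
    ∑ k ∈ Finset.range (2 ^ m), walsh k x * walsh k y =
      if ⌊(2 : ℝ) ^ m * x⌋ = ⌊(2 : ℝ) ^ m * y⌋ then 2 ^ m else 0 := by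
  induction m with
  | zero => simp [walsh_zero, hxy]
  | succ m ih =>
    simp only [sum_walsh_mul_walsh_two_pow_succ, ih, floor_two_pow_succ_mul_eq_iff]
    rcases rademacher_eq_one_or_neg_one m x with hx | hx <;>
      rcases rademacher_eq_one_or_neg_one m y with hy | hy <;>
        norm_num [hx, hy, pow_succ']

lemma IsDyadicStep.eq_sum_walsh {m : ℕ} {g : ℝ → ℝ} (hg : IsDyadicStep m g) {x : ℝ}
    (hx : x ∈ Set.Ico (0 : ℝ) 1) :
    g x = ∑ k ∈ Finset.range (2 ^ m),
      (∑ j ∈ Finset.range (2 ^ m), g (j / 2 ^ m) * walsh k (j / 2 ^ m) / 2 ^ m) * walsh k x := by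
  obtain ⟨i, hi⟩ := Int.eq_ofNat_of_zero_le (floor_two_pow_mul_mem_Ico m hx).1
  have hi_lt : i < 2 ^ m := by
    have := (floor_two_pow_mul_mem_Ico m hx).2
    rw [hi] at this
    exact_mod_cast this
  have hkernel (j : ℕ) (hj : j < 2 ^ m) :
      ∑ k ∈ Finset.range (2 ^ m), walsh k (j / 2 ^ m) * walsh k x =
        if j = i then 2 ^ m else 0 := by
    have hj1 : (j / 2 ^ m : ℝ) < 1 := (div_lt_one (by positivity)).2 (by exact_mod_cast hj)
    rw [sum_walsh_mul_walsh_two_pow m, hi, mul_div_cancel₀ _ (by positivity)]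
    · simp
    · rw [Int.floor_eq_zero_iff.2 hx, Int.floor_eq_zero_iff.2 ⟨by positivity, hj1⟩]
  calc g x = ∑ j ∈ Finset.range (2 ^ m), g (j / 2 ^ m) / 2 ^ m * if j = i then 2 ^ m else 0 := by
        simp [hi_lt, hg.eq_apply_floor x, hi]
    _ = ∑ j ∈ Finset.range (2 ^ m), g (j / 2 ^ m) / 2 ^ m *
          ∑ k ∈ Finset.range (2 ^ m), walsh k (j / 2 ^ m) * walsh k x :=
        Finset.sum_congr rfl fun j hj => by rw [hkernel j (Finset.mem_range.1 hj)]
    _ = _ := by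
        simp_rw [Finset.mul_sum, Finset.sum_mul]
        rw [Finset.sum_comm]
        refine Finset.sum_congr rfl fun k _ => Finset.sum_congr rfl fun j _ => by ring

lemma IsDyadicStep.integral_eq_sum_walsh {m : ℕ} {g : ℝ → ℝ} (hg : IsDyadicStep m g)
    {μ : Measure ℝ} [IsFiniteMeasure μ] (hμ : ∀ᵐ x ∂μ, x ∈ Set.Ico (0 : ℝ) 1) :
    ∫ x, g x ∂μ = ∑ k ∈ Finset.range (2 ^ m),
      (∑ j ∈ Finset.range (2 ^ m), g (j / 2 ^ m) * walsh k (j / 2 ^ m) / 2 ^ m) *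
        ∫ x, walsh k x ∂μ := by
  rw [integral_congr_ae (hμ.mono fun x hx => hg.eq_sum_walsh hx),
    integral_finsetSum _ fun k _ => (integrable_walsh μ k).const_mul _]
  simp_rw [integral_const_mul]

lemma tendsto_floor_two_pow_mul_div (x : ℝ) :
    Tendsto (fun m : ℕ => (⌊(2 : ℝ) ^ m * x⌋ / 2 ^ m : ℝ)) atTop (nhds x) := by
  have hpos (m : ℕ) : (0 : ℝ) < 2 ^ m := by positivity
  have hlower : Tendsto (fun m : ℕ => x - (1 / 2) ^ m) atTop (nhds x) := by
    simpa using (tendsto_pow_atTop_nhds_zero_of_lt_one (r := (1 / 2 : ℝ))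
      (by norm_num) (by norm_num)).const_sub x
  refine tendsto_of_tendsto_of_tendsto_of_le_of_le hlower tendsto_const_nhds
    (fun m => ?_) fun m => ?_
  · have := Int.sub_one_lt_floor ((2 : ℝ) ^ m * x)
    simp only [one_div, inv_pow]
    rw [le_div_iff₀ (hpos m), sub_mul, inv_mul_cancel₀ (hpos m).ne']
    linarith
  · rw [div_le_iff₀ (hpos m), mul_comm x]
    exact Int.floor_le _

lemma tendsto_integral_comp_floor (f : BoundedContinuousFunction ℝ ℝ) (μ : Measure ℝ)
    [IsFiniteMeasure μ] :
    Tendsto (fun m : ℕ => ∫ x, f (⌊(2 : ℝ) ^ m * x⌋ / 2 ^ m) ∂μ) atTop (nhds (∫ x, f x ∂μ)) := by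
  refine tendsto_integral_of_dominated_convergence (fun _ => ‖f‖) (fun m => ?_)
    (integrable_const _) (fun m => .of_forall fun x => f.norm_coe_le_norm _)
    (.of_forall fun x => ?_)
  · exact (f.continuous.measurable.comp (by fun_prop)).aestronglyMeasurable
  · exact (f.continuous.tendsto x).comp (tendsto_floor_two_pow_mul_div x)

lemma measure_ext_of_integral_walsh {μ ν : Measure ℝ} [IsFiniteMeasure μ] [IsFiniteMeasure ν]
    (hμ : ∀ᵐ x ∂μ, x ∈ Set.Ico (0 : ℝ) 1) (hν : ∀ᵐ x ∂ν, x ∈ Set.Ico (0 : ℝ) 1)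
    (h : ∀ k, ∫ x, walsh k x ∂μ = ∫ x, walsh k x ∂ν) : μ = ν := by
  refine ext_of_forall_integral_eq_of_IsFiniteMeasure fun f => ?_
  have hstep (m : ℕ) : IsDyadicStep m fun x => f (⌊(2 : ℝ) ^ m * x⌋ / 2 ^ m) :=
    fun x y (hxy : ⌊_⌋ = ⌊_⌋) => by simp only [hxy]
  refine tendsto_nhds_unique (tendsto_integral_comp_floor f μ) ?_
  simp_rw [(hstep _).integral_eq_sum_walsh hμ, h, ← (hstep _).integral_eq_sum_walsh hν]
  exact tendsto_integral_comp_floor f ν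

/-! ### Dyadic addition -/

lemma dyadicAdd_eq_ofDigits (x t : ℝ) :
    dyadicAdd x t = Real.ofDigits (x.digits 2 + t.digits 2) := by
  have habs (a b : Fin 2) : |((a : ℕ) : ℝ) - (b : ℕ)| = ((a + b : Fin 2) : ℕ) := by
    fin_cases a <;> fin_cases b <;> norm_num
  have hdigit (k : ℕ) (z : ℝ) : binDigit k z = (z.digits 2 k : ℕ) := rfl
  refine tsum_congr fun k => ?_
  rw [hdigit, hdigit, habs, Real.ofDigitsTerm, div_eq_mul_inv, Pi.add_apply, Nat.cast_ofNat]

lemma measurable_digits (b : ℕ) [NeZero b] : Measurable fun x : ℝ => x.digits b :=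
  measurable_pi_lambda _ fun k => (measurable_of_countable (Fin.ofNat b)).comp (by fun_prop)

lemma measurable_dyadicAdd : Measurable (Function.uncurry dyadicAdd) := by
  simp only [Function.uncurry_def, dyadicAdd_eq_ofDigits]
  have hdigits := measurable_digits 2
  exact Real.continuous_ofDigits.measurable.comp
    ((hdigits.comp measurable_fst).add (hdigits.comp measurable_snd))

lemma ofDigits_lt_one {b : ℕ} [NeZero b] {d : ℕ → Fin (b + 1)} {k : ℕ} (hk : d k ≠ Fin.last b) :
    Real.ofDigits d < 1 := by
  rw [← Real.ofDigits_const_last_eq_one b]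
  refine Summable.tsum_lt_tsum (i := k) (fun i => ?_) ?_ Real.summable_ofDigitsTerm
    Real.summable_ofDigitsTerm
  · unfold Real.ofDigitsTerm
    gcongr
    exact Fin.le_last _
  · unfold Real.ofDigitsTerm
    gcongr
    exact Fin.lt_last_iff_ne_last.2 hk

lemma mul_ofDigits {b : ℕ} [NeZero b] (d : ℕ → Fin b) :
    b * Real.ofDigits d = (d 0 : ℕ) + Real.ofDigits fun i => d (i + 1) := by
  have hb : (b : ℝ) ≠ 0 := NeZero.ne _
  rw [Real.ofDigits_eq_sum_add_ofDigits d 1, Finset.sum_range_one, Real.ofDigitsTerm]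
  simp only [zero_add, pow_one]
  field_simp

lemma rademacher_natCast_add (n a : ℕ) (x : ℝ) : rademacher n (a + x) = rademacher n x := by
  have h : (2 : ℝ) ^ n * (a + x) = 2 ^ n * x + (2 ^ n * a : ℕ) := by push_cast; ring
  rw [rademacher, rademacher, r0, r0, h, Int.fract_add_natCast]

lemma r0_ofDigits {d : ℕ → Fin 2} (hd : ∃ k, d (k + 1) = 0) :
    r0 (Real.ofDigits d) = (-1) ^ (d 0 : ℕ) := by
  obtain ⟨k, hk⟩ := hd
  have hshift : 2 * Real.ofDigits d = (d 0 : ℕ) + Real.ofDigits fun i => d (i + 1) :=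
    mul_ofDigits d
  have h0 := Real.ofDigits_nonneg fun i => d (i + 1)
  have h1 : Real.ofDigits (fun i => d (i + 1)) < 1 := ofDigits_lt_one (k := k) (by simp [hk])
  rcases (eq_or_ne (d 0) 0).imp_right (Fin.eq_one_of_ne_zero _) with h | h <;>
    simp only [h, Fin.val_zero, Fin.val_one, Nat.cast_zero, Nat.cast_one] at hshift ⊢
  · rw [r0, Int.fract_eq_self.2 ⟨by linarith, by linarith⟩, if_pos (by linarith), pow_zero]
  · rw [r0, Int.fract_eq_self.2 ⟨by linarith, by linarith⟩, if_neg (by linarith), pow_one]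

lemma rademacher_ofDigits {d : ℕ → Fin 2} (hd : ∃ᶠ k in atTop, d k = 0) (n : ℕ) :
    rademacher n (Real.ofDigits d) = (-1) ^ (d n : ℕ) := by
  induction n generalizing d with
  | zero =>
    obtain ⟨k, hk_pos, hk⟩ := frequently_atTop.1 hd 1
    rw [rademacher, pow_zero, one_mul, r0_ofDigits ⟨k - 1, by rwa [Nat.sub_add_cancel hk_pos]⟩]
  | succ n ih =>
    have hd' : ∃ᶠ k in atTop, d (k + 1) = 0 := by
      rw [← map_add_atTop_eq_nat 1] at hd
      exact hd
    calc rademacher (n + 1) (Real.ofDigits d)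
        = rademacher n (2 * Real.ofDigits d) := by
          rw [rademacher, rademacher, pow_succ, mul_assoc]
      _ = rademacher n ((d 0 : ℕ) + Real.ofDigits fun i => d (i + 1)) :=
          congrArg _ (mul_ofDigits d)
      _ = (-1) ^ (d (n + 1) : ℕ) := by
          rw [rademacher_natCast_add, ih hd']

lemma rademacher_eq_neg_one_pow_digits {x : ℝ} (hx : 0 ≤ x) (k : ℕ) :
    rademacher k x = (-1) ^ (x.digits 2 k : ℕ) := by
  have hdigit : (x.digits 2 k : ℕ) = ⌊2 ^ (k + 1) * x⌋₊ % 2 := by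
    rw [mul_comm]; rfl
  have hhalf : ⌊2 ^ k * x⌋₊ = ⌊2 ^ (k + 1) * x⌋₊ / 2 := by
    rw [pow_succ', mul_assoc]
    exact (Nat.cast_mul_floor_div_cancel two_ne_zero _).symm
  rw [rademacher_eq, hdigit, ← natCast_floor_eq_intCast_floor (by positivity),
    ← natCast_floor_eq_intCast_floor (by positivity), hhalf]
  generalize ⌊2 ^ (k + 1) * x⌋₊ = M
  rcases Nat.even_or_odd' M with ⟨q, rfl | rfl⟩
  · simp; ring
  · have : (2 * q + 1) / 2 = q := by omega
    simp [this]; ring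

lemma rademacher_dyadicAdd {x t : ℝ} (hx : 0 ≤ x) (ht : 0 ≤ t)
    (h : ∃ᶠ k in atTop, (x.digits 2 + t.digits 2) k = 0) (k : ℕ) :
    rademacher k (dyadicAdd x t) = rademacher k x * rademacher k t := by
  have hsign (a b : Fin 2) :
      (-1 : ℝ) ^ ((a + b : Fin 2) : ℕ) = (-1) ^ (a : ℕ) * (-1) ^ (b : ℕ) := by
    fin_cases a <;> fin_cases b <;> simp
  rw [dyadicAdd_eq_ofDigits, rademacher_ofDigits h, rademacher_eq_neg_one_pow_digits hx,
    rademacher_eq_neg_one_pow_digits ht, Pi.add_apply, hsign]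

lemma walsh_dyadicAdd {x t : ℝ} (hx : 0 ≤ x) (ht : 0 ≤ t)
    (h : ∃ᶠ k in atTop, (x.digits 2 + t.digits 2) k = 0) (n : ℕ) :
    walsh n (dyadicAdd x t) = walsh n x * walsh n t := by
  unfold walsh
  rw [← Finset.prod_mul_distrib]
  refine Finset.prod_congr rfl fun k _ => ?_
  split_ifs
  · exact rademacher_dyadicAdd hx ht h k
  · exact (one_mul 1).symm

lemma countable_setOf_digits_eventuallyEq {b : ℕ} [NeZero b] (hb : 1 < b) (c : ℕ → Fin b) :
    {x ∈ Set.Ico (0 : ℝ) 1 | x.digits b =ᶠ[atTop] c}.Countable := by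
  refine (Set.countable_range fun s : ℕ →₀ Fin b => Real.ofDigits (⇑s + c)).mono ?_
  rintro x ⟨hx, hxc⟩
  have hfinite : (Function.support (x.digits b - c)).Finite := by
    rw [← Nat.cofinite_eq_atTop] at hxc
    exact hxc.subset fun k hk => sub_ne_zero.1 hk
  refine ⟨Finsupp.ofSupportFinite _ hfinite, ?_⟩
  simp only [Finsupp.ofSupportFinite_coe, sub_add_cancel, Real.ofDigits_digits hb hx]

lemma ae_frequently_digits_add_eq_zero (c : ℕ → Fin 2) :
    ∀ᵐ x ∂unitMeasure, ∃ᶠ k in atTop, (x.digits 2 + c) k = 0 := by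
  have hcountable := countable_setOf_digits_eventuallyEq one_lt_two (1 - c)
  filter_upwards [ae_unitMeasure_mem_Ico, ae_restrict_of_ae (hcountable.ae_notMem volume)]
    with x hx hxc hfreq
  refine hxc ⟨hx, ?_⟩
  filter_upwards [hfreq] with k hk
  exact eq_sub_of_add_eq (Fin.eq_one_of_ne_zero _ hk)

lemma integral_walsh_dyadicAdd {t : ℝ} (ht : 0 ≤ t) (n : ℕ) :
    ∫ x, walsh n (dyadicAdd x t) ∂unitMeasure = ∫ x, walsh n x ∂unitMeasure := by
  rcases eq_or_ne n 0 with rfl | hn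
  · simp only [walsh_zero]
  calc ∫ x, walsh n (dyadicAdd x t) ∂unitMeasure
      = ∫ x, walsh n x * walsh n t ∂unitMeasure := by
        refine integral_congr_ae ?_
        filter_upwards [ae_unitMeasure_mem_Ico, ae_frequently_digits_add_eq_zero (t.digits 2)]
          with x hx hfreq
        exact walsh_dyadicAdd hx.1 ht hfreq n
    _ = ∫ x, walsh n x ∂unitMeasure := by
        rw [integral_mul_const, integral_walsh_of_ne_zero hn, zero_mul]

lemma measurePreserving_dyadicAdd_right {t : ℝ} (ht : 0 ≤ t) :
    MeasurePreserving (fun x => dyadicAdd x t) unitMeasure unitMeasure := by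
  have hmeas : Measurable fun x => dyadicAdd x t := measurable_dyadicAdd.of_uncurry_right
  refine ⟨hmeas, ?_⟩
  have := Measure.isProbabilityMeasure_map hmeas.aemeasurable (μ := unitMeasure)
  refine measure_ext_of_integral_walsh ?_ ae_unitMeasure_mem_Ico fun n => ?_
  · refine (ae_map_iff hmeas.aemeasurable measurableSet_Ico).2 ?_
    filter_upwards [ae_frequently_digits_add_eq_zero (t.digits 2)] with x hfreq
    obtain ⟨k, hk⟩ := hfreq.exists
    rw [dyadicAdd_eq_ofDigits]
    exact ⟨Real.ofDigits_nonneg _, ofDigits_lt_one (k := k) (by simp [hk])⟩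
  · rw [integral_map hmeas.aemeasurable (measurable_walsh n).aestronglyMeasurable,
      integral_walsh_dyadicAdd ht]

theorem lintegral_enorm_dyadicConv_le {f K : ℝ → ℝ} (hf : AEMeasurable f unitMeasure)
    (hK : Measurable K) :
    ∫⁻ x, ‖dyadicConv f K x‖ₑ ∂unitMeasure ≤
      (∫⁻ t, ‖f t‖ₑ ∂unitMeasure) * ∫⁻ x, ‖K x‖ₑ ∂unitMeasure := by
  have hmeas : AEMeasurable (fun p : ℝ × ℝ => ‖f p.2‖ₑ * ‖K (dyadicAdd p.1 p.2)‖ₑ)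
      (unitMeasure.prod unitMeasure) :=
    hf.comp_snd.enorm.mul (hK.comp measurable_dyadicAdd).enorm.aemeasurable
  calc ∫⁻ x, ‖dyadicConv f K x‖ₑ ∂unitMeasure
      ≤ ∫⁻ x, ∫⁻ t, ‖f t‖ₑ * ‖K (dyadicAdd x t)‖ₑ ∂unitMeasure ∂unitMeasure := by
        refine lintegral_mono fun x => ?_
        simp_rw [← enorm_mul]
        exact enorm_integral_le_lintegral_enorm _
    _ = ∫⁻ t, ∫⁻ x, ‖f t‖ₑ * ‖K (dyadicAdd x t)‖ₑ ∂unitMeasure ∂unitMeasure :=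
        lintegral_lintegral_swap hmeas
    _ = ∫⁻ t, ‖f t‖ₑ * ∫⁻ x, ‖K x‖ₑ ∂unitMeasure ∂unitMeasure := by
        refine lintegral_congr_ae ?_
        filter_upwards [ae_unitMeasure_mem_Ico] with t ht
        rw [lintegral_const_mul' _ _ enorm_ne_top,
          (measurePreserving_dyadicAdd_right ht.1).lintegral_comp hK.enorm]
    _ = (∫⁻ t, ‖f t‖ₑ ∂unitMeasure) * ∫⁻ x, ‖K x‖ₑ ∂unitMeasure :=
        lintegral_mul_const'' _ hf.enorm

/-! ### The Fejér and Riesz kernels -/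

lemma dirichletKernel_two_pow_add {m j : ℕ} (hj : j ≤ 2 ^ m) (x : ℝ) :
    dirichletKernel (2 ^ m + j) x =
      dirichletKernel (2 ^ m) x + rademacher m x * dirichletKernel j x := by
  simp only [dirichletKernel, Finset.sum_range_add, Finset.mul_sum]
  refine congrArg₂ _ rfl (Finset.sum_congr rfl fun k hk => ?_)
  exact walsh_two_pow_add ((Finset.mem_range.1 hk).trans_le hj) x

lemma one_add_rademacher_nonneg (m : ℕ) (x : ℝ) : 0 ≤ 1 + rademacher m x := by
  linarith [neg_abs_le (rademacher m x), abs_rademacher m x]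

lemma dirichletKernel_two_pow_nonneg (m : ℕ) (x : ℝ) : 0 ≤ dirichletKernel (2 ^ m) x := by
  induction m with
  | zero => simp [dirichletKernel, walsh_zero]
  | succ m ih =>
    rw [pow_succ, mul_two, dirichletKernel_two_pow_add le_rfl, ← one_add_mul]
    exact mul_nonneg (one_add_rademacher_nonneg m x) ih

lemma integral_dirichletKernel {n : ℕ} (hn : n ≠ 0) :
    ∫ x, dirichletKernel n x ∂unitMeasure = 1 := by
  obtain ⟨n, rfl⟩ := Nat.exists_eq_succ_of_ne_zero hn
  simp_rw [dirichletKernel, Finset.sum_range_succ']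
  rw [integral_add (integrable_finsetSum _ fun k _ => integrable_walsh _ _) (integrable_walsh _ _),
    integral_finsetSum _ fun k _ => integrable_walsh _ _,
    Finset.sum_eq_zero fun k _ => integral_walsh_of_ne_zero k.succ_ne_zero]
  simp [walsh_zero]

lemma isDyadicStep_dirichletKernel {n m : ℕ} (hn : n ≤ 2 ^ m) :
    IsDyadicStep m (dirichletKernel n) :=
  .sum fun _ hk => isDyadicStep_walsh ((Finset.mem_range.1 hk).trans_le hn)

lemma measurable_dirichletKernel (n : ℕ) : Measurable (dirichletKernel n) :=
  (isDyadicStep_dirichletKernel Nat.lt_two_pow_self.le).measurable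

lemma integrable_dirichletKernel (n : ℕ) : Integrable (dirichletKernel n) unitMeasure :=
  (isDyadicStep_dirichletKernel Nat.lt_two_pow_self.le).integrable

/-- The sum `D_1 + ⋯ + D_n` of Walsh–Dirichlet kernels, i.e. `n` times the Walsh–Fejér kernel. -/
def dirichletSum (n : ℕ) (x : ℝ) : ℝ := ∑ k ∈ Finset.range n, dirichletKernel (k + 1) x

lemma isDyadicStep_dirichletSum {n m : ℕ} (hn : n ≤ 2 ^ m) : IsDyadicStep m (dirichletSum n) :=
  .sum fun _ hk => isDyadicStep_dirichletKernel ((Finset.mem_range.1 hk : _ < n).trans_le hn)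

lemma integrable_abs_dirichletSum (n : ℕ) :
    Integrable (fun x => |dirichletSum n x|) unitMeasure :=
  (isDyadicStep_dirichletSum Nat.lt_two_pow_self.le).integrable.abs

lemma dirichletSum_two_pow_add {m j : ℕ} (hj : j ≤ 2 ^ m) (x : ℝ) :
    dirichletSum (2 ^ m + j) x = dirichletSum (2 ^ m) x + j * dirichletKernel (2 ^ m) x +
      rademacher m x * dirichletSum j x := by
  have hshift : ∀ k ∈ Finset.range j, dirichletKernel (2 ^ m + k + 1) x =
      dirichletKernel (2 ^ m) x + rademacher m x * dirichletKernel (k + 1) x := fun k hk =>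
    dirichletKernel_two_pow_add ((Nat.succ_le_of_lt (Finset.mem_range.1 hk)).trans hj) x
  simp only [dirichletSum, Finset.mul_sum]
  rw [Finset.sum_range_add, Finset.sum_congr rfl hshift, Finset.sum_add_distrib, Finset.sum_const,
    Finset.card_range, nsmul_eq_mul, add_assoc]

lemma abs_dirichletSum_two_pow_succ_le (m : ℕ) (x : ℝ) :
    |dirichletSum (2 ^ (m + 1)) x| ≤ |dirichletSum (2 ^ m) x| +
      rademacher m x * |dirichletSum (2 ^ m) x| + 2 ^ m * dirichletKernel (2 ^ m) x := by
  have hsplit : dirichletSum (2 ^ (m + 1)) x =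
      (1 + rademacher m x) * dirichletSum (2 ^ m) x + 2 ^ m * dirichletKernel (2 ^ m) x := by
    rw [pow_succ, mul_two, dirichletSum_two_pow_add le_rfl]
    push_cast
    ring
  have hD := mul_nonneg (pow_nonneg zero_le_two m) (dirichletKernel_two_pow_nonneg m x)
  calc |dirichletSum (2 ^ (m + 1)) x|
      ≤ |(1 + rademacher m x) * dirichletSum (2 ^ m) x| + |2 ^ m * dirichletKernel (2 ^ m) x| := by
        rw [hsplit]
        exact abs_add_le _ _
    _ = _ := by
        rw [abs_mul, abs_of_nonneg (one_add_rademacher_nonneg m x), abs_of_nonneg hD,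
          one_add_mul]

lemma integral_abs_dirichletSum_two_pow_le (m : ℕ) :
    ∫ x, |dirichletSum (2 ^ m) x| ∂unitMeasure ≤ 2 ^ m := by
  induction m with
  | zero => simp [dirichletSum, dirichletKernel, walsh_zero]
  | succ m ih =>
    have hstep : IsDyadicStep m fun x => |dirichletSum (2 ^ m) x| :=
      (isDyadicStep_dirichletSum le_rfl).comp abs
    have hr : Integrable (fun x => rademacher m x * |dirichletSum (2 ^ m) x|) unitMeasure :=
      ((isDyadicStep_rademacher m).mul (hstep.mono m.le_succ)).integrable
    have hD := (integrable_dirichletKernel (2 ^ m)).const_mul (2 ^ m)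
    calc ∫ x, |dirichletSum (2 ^ (m + 1)) x| ∂unitMeasure
        ≤ ∫ x, |dirichletSum (2 ^ m) x| + rademacher m x * |dirichletSum (2 ^ m) x| +
            2 ^ m * dirichletKernel (2 ^ m) x ∂unitMeasure :=
          integral_mono (integrable_abs_dirichletSum _) ((hstep.integrable.fun_add hr).add hD)
            (abs_dirichletSum_two_pow_succ_le m)
      _ = ∫ x, |dirichletSum (2 ^ m) x| ∂unitMeasure + 2 ^ m := by
          rw [integral_add (hstep.integrable.fun_add hr) hD, integral_add hstep.integrable hr,
            hstep.integral_rademacher_mul, integral_const_mul,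
            integral_dirichletKernel (by positivity), add_zero, mul_one]
      _ ≤ 2 ^ (m + 1) := by
          rw [pow_succ, mul_two]
          gcongr

lemma abs_dirichletSum_two_pow_add_le {m j : ℕ} (hj : j ≤ 2 ^ m) (x : ℝ) :
    |dirichletSum (2 ^ m + j) x| ≤
      |dirichletSum (2 ^ m) x| + j * dirichletKernel (2 ^ m) x + |dirichletSum j x| := by
  have hD := mul_nonneg (Nat.cast_nonneg (α := ℝ) j) (dirichletKernel_two_pow_nonneg m x)
  rw [dirichletSum_two_pow_add hj]
  refine (abs_add_three _ _ _).trans_eq ?_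
  rw [abs_of_nonneg hD, abs_mul, abs_rademacher, one_mul]

theorem integral_abs_dirichletSum_le (n : ℕ) :
    ∫ x, |dirichletSum n x| ∂unitMeasure ≤ 2 * n := by
  induction n using Nat.strong_induction_on with
  | _ n ih =>
    rcases eq_or_ne n 0 with rfl | hn
    · simp [dirichletSum]
    obtain ⟨m, j, hj, rfl⟩ := exists_lt_two_pow_eq_two_pow_add hn
    have hS := integrable_abs_dirichletSum
    have hD := (integrable_dirichletKernel (2 ^ m)).const_mul (j : ℝ)
    have hj' : (j : ℝ) ≤ 2 ^ m := by exact_mod_cast hj.le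
    calc ∫ x, |dirichletSum (2 ^ m + j) x| ∂unitMeasure
        ≤ ∫ x, |dirichletSum (2 ^ m) x| + j * dirichletKernel (2 ^ m) x +
            |dirichletSum j x| ∂unitMeasure :=
          integral_mono (hS _) (((hS _).fun_add hD).add (hS _))
            (abs_dirichletSum_two_pow_add_le hj.le)
      _ = ∫ x, |dirichletSum (2 ^ m) x| ∂unitMeasure + j +
            ∫ x, |dirichletSum j x| ∂unitMeasure := by
          rw [integral_add ((hS _).fun_add hD) (hS _), integral_add (hS _) hD, integral_const_mul,
            integral_dirichletKernel (by positivity), mul_one]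
      _ ≤ 2 ^ m + j + 2 * j := by
          gcongr
          · exact integral_abs_dirichletSum_two_pow_le m
          · exact ih j (Nat.lt_add_of_pos_left (by positivity))
      _ ≤ 2 * (2 ^ m + j : ℕ) := by
          push_cast
          linarith

lemma sum_range_mul_by_parts (w a : ℕ → ℝ) (n : ℕ) :
    ∑ i ∈ Finset.range n, w i * a i = w (n - 1) * ∑ i ∈ Finset.range n, a i +
      ∑ i ∈ Finset.range (n - 1), (w i - w (i + 1)) * ∑ j ∈ Finset.range (i + 1), a j := by
  have := Finset.sum_range_by_parts w a n
  simp only [smul_eq_mul] at this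
  rw [this, sub_eq_add_neg, ← Finset.sum_neg_distrib]
  simp only [← neg_mul, neg_sub]

lemma abs_sum_range_mul_le {w : ℕ → ℝ} (hw : Antitone w) (hw0 : ∀ i, 0 ≤ w i) (a : ℕ → ℝ)
    (n : ℕ) :
    |∑ i ∈ Finset.range n, w i * a i| ≤ w (n - 1) * |∑ i ∈ Finset.range n, a i| +
      ∑ i ∈ Finset.range (n - 1), (w i - w (i + 1)) * |∑ j ∈ Finset.range (i + 1), a j| := by
  rw [sum_range_mul_by_parts]
  refine (abs_add_le _ _).trans (add_le_add ?_ ((Finset.abs_sum_le_sum_abs _ _).trans ?_))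
  · rw [abs_mul, abs_of_nonneg (hw0 _)]
  · gcongr with i
    rw [abs_mul, abs_of_nonneg (sub_nonneg.2 (hw i.le_succ))]

lemma integral_abs_sum_range_mul_le {α : Type*} [MeasurableSpace α] {μ : Measure α}
    {w : ℕ → ℝ} (hw : Antitone w) (hw0 : ∀ i, 0 ≤ w i) {a : ℕ → α → ℝ}
    (ha : ∀ i, Integrable (a i) μ) {C : ℝ}
    (hC : ∀ n : ℕ, ∫ x, |∑ i ∈ Finset.range n, a i x| ∂μ ≤ C * n) (n : ℕ) :
    ∫ x, |∑ i ∈ Finset.range n, w i * a i x| ∂μ ≤ C * ∑ i ∈ Finset.range n, w i := by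
  have hA (N : ℕ) : Integrable (fun x => |∑ i ∈ Finset.range N, a i x|) μ :=
    (integrable_finsetSum _ fun i _ => ha i).abs
  have hsum : Integrable (fun x => ∑ i ∈ Finset.range (n - 1),
      (w i - w (i + 1)) * |∑ j ∈ Finset.range (i + 1), a j x|) μ :=
    integrable_finsetSum _ fun i _ => (hA _).const_mul _
  calc ∫ x, |∑ i ∈ Finset.range n, w i * a i x| ∂μ
      ≤ ∫ x, w (n - 1) * |∑ i ∈ Finset.range n, a i x| + ∑ i ∈ Finset.range (n - 1),
          (w i - w (i + 1)) * |∑ j ∈ Finset.range (i + 1), a j x| ∂μ :=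
        integral_mono (integrable_finsetSum _ fun i _ => (ha i).const_mul _).abs
          (((hA n).const_mul _).add hsum) fun x => abs_sum_range_mul_le hw hw0 _ n
    _ = w (n - 1) * ∫ x, |∑ i ∈ Finset.range n, a i x| ∂μ + ∑ i ∈ Finset.range (n - 1),
          (w i - w (i + 1)) * ∫ x, |∑ j ∈ Finset.range (i + 1), a j x| ∂μ := by
        rw [integral_add ((hA n).const_mul _) hsum,
          integral_finsetSum _ fun i _ => (hA _).const_mul _]
        simp_rw [integral_const_mul]
    _ ≤ w (n - 1) * (C * n) + ∑ i ∈ Finset.range (n - 1),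
          (w i - w (i + 1)) * (C * (i + 1 : ℕ)) := by
        gcongr with i
        · exact hw0 _
        · exact hC n
        · exact sub_nonneg.2 (hw i.le_succ)
        · exact hC (i + 1)
    _ = ∑ i ∈ Finset.range n, w i * C := by
        simp [sum_range_mul_by_parts w fun _ => C, mul_comm C]
    _ = C * ∑ i ∈ Finset.range n, w i := by rw [← Finset.sum_mul, mul_comm]

lemma logSum_eq_sum_range (n : ℕ) :
    logSum n = ∑ i ∈ Finset.range (n - 1), 1 / ((i : ℝ) + 1) := by
  rw [logSum, ← Finset.Ico_add_one_right_eq_Icc, Finset.sum_Ico_eq_sum_range]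
  simp [add_comm]

lemma GKernel_eq_sum_range (n : ℕ) (x : ℝ) :
    GKernel n x = (1 / logSum n) *
      ∑ i ∈ Finset.range (n - 1), 1 / ((i : ℝ) + 1) * dirichletKernel (i + 1) x := by
  rw [GKernel, Finset.sum_Ico_eq_sum_range]
  simp [add_comm, div_eq_inv_mul]

lemma measurable_GKernel (n : ℕ) : Measurable (GKernel n) :=
  (Finset.measurable_fun_sum _ fun i _ => (measurable_dirichletKernel i).div_const _).const_mul _

lemma integrable_GKernel (n : ℕ) : Integrable (GKernel n) unitMeasure :=
  (integrable_finsetSum _ fun i _ => (integrable_dirichletKernel i).div_const _).const_mul _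

theorem integral_abs_GKernel_le (n : ℕ) : ∫ x, |GKernel n x| ∂unitMeasure ≤ 2 := by
  have hanti : Antitone fun i : ℕ => 1 / ((i : ℝ) + 1) := fun i j hij => by
    dsimp only
    gcongr
  have hlog : 0 ≤ logSum n := Finset.sum_nonneg fun k _ => by positivity
  have hsum : ∫ x, |∑ i ∈ Finset.range (n - 1), 1 / ((i : ℝ) + 1) * dirichletKernel (i + 1) x|
      ∂unitMeasure ≤ 2 * logSum n := by
    rw [logSum_eq_sum_range]
    exact integral_abs_sum_range_mul_le hanti (fun i => by positivity)
      (fun i => integrable_dirichletKernel (i + 1)) integral_abs_dirichletSum_le (n - 1)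
  simp_rw [GKernel_eq_sum_range, abs_mul, integral_const_mul]
  rw [abs_of_nonneg (by positivity)]
  calc 1 / logSum n * _ ≤ 1 / logSum n * (2 * logSum n) := by gcongr
    _ = 2 * (logSum n / logSum n) := by ring
    _ ≤ 2 := by linarith [div_self_le_one (logSum n)]

/-- the Riesz logarithmic means `f ↦ f ∗ G_n` are uniformly of strong type
`(1,1)` on `[0,1)`. -/
theorem stmt17 : ∃ C > (0:ℝ), ∀ n : ℕ, 2 ≤ n → ∀ f : ℝ → ℝ, Measurable f →
    Integrable f unitMeasure →
    ∫⁻ x, ENNReal.ofReal |dyadicConv f (GKernel n) x| ∂unitMeasure ≤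
      ENNReal.ofReal (C * ∫ x, |f x| ∂unitMeasure) := by
  refine ⟨2, two_pos, fun n _ f hf hf_int => ?_⟩
  have hL1 {g : ℝ → ℝ} (hg : Integrable g unitMeasure) :
      ∫⁻ x, ‖g x‖ₑ ∂unitMeasure = ENNReal.ofReal (∫ x, |g x| ∂unitMeasure) :=
    (ofReal_integral_norm_eq_lintegral_enorm hg).symm
  calc ∫⁻ x, ENNReal.ofReal |dyadicConv f (GKernel n) x| ∂unitMeasure
      = ∫⁻ x, ‖dyadicConv f (GKernel n) x‖ₑ ∂unitMeasure := by
        simp_rw [Real.enorm_eq_ofReal_abs]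
    _ ≤ (∫⁻ x, ‖f x‖ₑ ∂unitMeasure) * ∫⁻ x, ‖GKernel n x‖ₑ ∂unitMeasure :=
        lintegral_enorm_dyadicConv_le hf.aemeasurable (measurable_GKernel n)
    _ ≤ ENNReal.ofReal (∫ x, |f x| ∂unitMeasure) * ENNReal.ofReal 2 := by
        rw [hL1 hf_int, hL1 (integrable_GKernel n)]
        gcongr
        exact integral_abs_GKernel_le n
    _ = ENNReal.ofReal (2 * ∫ x, |f x| ∂unitMeasure) := by
        rw [ENNReal.ofReal_mul zero_le_two, mul_comm]

end
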